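/- (Non-linear sewing lemma, weak formulation.) Under Hypothesis 1, there exists a family ψ = (ψ_{t,s})_{0≤s≤t≤T} of maps from V to V such that: (1) ψ has the flow property, i.e. ψ_{t,t}(a) = a and ψ_{t,s}(ψ_{s,r}(a)) = ψ_{t,r}(a) for all 0 ≤ r ≤ s ≤ t ≤ T and a ∈ V; (2) each map ψ_{t,s} : V → V is Borel measurable; (3) ψ is in the same galaxy as φ, i.e. there is a constant C such that ‖ψ_{t,s}(a) − φ_{t,s}(a)‖ ≤ C·N(a)·ϖ(ω_{s,t}) for all 0 ≤ s ≤ t ≤ T and a ∈ V. -/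

import Mathlib

open Set

noncomputable section

/-- A control: a super-additive family `ω` vanishing on the diagonal and small
near the diagonal. -/
structure IsControl (T : ℝ) (ω : ℝ → ℝ → ℝ) : Prop where
  nonneg : ∀ ⦃s t : ℝ⦄, 0 ≤ s → s ≤ t → t ≤ T → 0 ≤ ω s t
  superadd : ∀ ⦃r s t : ℝ⦄, 0 ≤ r → r ≤ s → s ≤ t → t ≤ T → ω r s + ω s t ≤ ω r t
  diag : ∀ ⦃s : ℝ⦄, 0 ≤ s → s ≤ T → ω s s = 0
  small : ∀ ε > (0:ℝ), ∃ h > (0:ℝ), ∀ ⦃s t : ℝ⦄, 0 ≤ s → s ≤ t → t ≤ T → t - s ≤ h → ω s t < ε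

/-- A remainder: a continuous increasing function `ϖ` with `2ϖ(x/2) ≤ κϖ(x)`. -/
structure IsRemainder (κ : ℝ) (ϖ : ℝ → ℝ) : Prop where
  contOn : ContinuousOn ϖ (Set.Ici 0)
  strictMonoOn : StrictMonoOn ϖ (Set.Ici 0)
  nonneg : ∀ x, 0 ≤ x → 0 ≤ ϖ x
  doubling : ∀ x, 0 < x → 2 * ϖ (x / 2) ≤ κ * ϖ x

/-- A Lipschitz almost flow on `[0,∞)` (Hypothesis 1): the Lipschitz estimate holds with
`η = 0` and a Lipschitz function `N`. -/
structure IsLipAlmostFlow {V : Type*} [NormedAddCommGroup V] (ω : ℝ → ℝ → ℝ)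
    (ϖ : ℝ → ℝ) (N : V → ℝ) (δT : ℝ) (φ : ℝ → ℝ → V → V) : Prop where
  cont : ∀ a : V, ContinuousOn (fun p : ℝ × ℝ => φ p.2 p.1 a)
    {p : ℝ × ℝ | 0 ≤ p.1 ∧ p.1 ≤ p.2}
  flow_id : ∀ ⦃t : ℝ⦄, 0 ≤ t → ∀ a, φ t t a = a
  close : ∀ ⦃s t : ℝ⦄, 0 ≤ s → s ≤ t → ∀ a, ‖φ t s a - a‖ ≤ δT * N a
  lip : ∀ ⦃s t : ℝ⦄, 0 ≤ s → s ≤ t → ∀ a b, ‖φ t s a - φ t s b‖ ≤ (1 + δT) * ‖a - b‖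
  almost : ∀ ⦃r s t : ℝ⦄, 0 ≤ r → r ≤ s → s ≤ t → ∀ a,
    ‖φ t s (φ s r a) - φ t r a‖ ≤ N a * ϖ (ω r t)

/-- The set `G^{C}_φ(r,a)` of D-solutions on `[r, r+T]` started at `(r,a)`, with
constant `C` (in the paper, `C = L_T·‖N‖_∞`). -/
def Gpaths {V : Type*} [NormedAddCommGroup V] (φ : ℝ → ℝ → V → V) (ω : ℝ → ℝ → ℝ)
    (ϖ : ℝ → ℝ) (C T r : ℝ) (a : V) : Set (ℝ → V) :=
  {y | ContinuousOn y (Set.Icc r (r + T)) ∧ y r = a ∧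
    ∀ ⦃s t : ℝ⦄, r ≤ s → s ≤ t → t ≤ r + T → ‖y t - φ t s (y s)‖ ≤ C * ϖ (ω s t)}

/-!
A *D-solution* of the almost flow `φ` from time `r` is a path `y` with
`dist (y t) (φ t s (y s)) ≤ K * ϖ (ω s t)`. Splitting `[s, t]` where the control is halved and using
`2 ϖ(x/2) ≤ κ ϖ(x)` turns the constant `K` into `κ(1 + D)/2 * K + 2M`, which is a contraction in
`K`. Hence one constant `L` serves all D-solutions: the Euler schemes along finite sets of times
satisfy it, so a limit along an ultrafilter exists, and it survives concatenation.

D-solutions need not be unique. They form a family with compact fibres, stable under restriction and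
concatenation, and this is inherited when one keeps, among the paths with a common starting point,
only those maximizing a continuous function of the position at a given time. Maximizing successively
a sequence of functions that separates the positions at all rational times leaves a single path per
starting point; uniqueness and stability under restriction give the flow property, and
measurability is carried along the successive maximizations.
-/

/-! ### Selecting a measurable flow from a family of sets of paths -/

section Selection

open Filter Topology

/-- The concatenation of two paths at time `s`: it follows `y` before `s` and `z` from `s` on. -/
def concatAt {ι V : Type*} [LinearOrder ι] (s : ι) (y z : ι → V) : ι → V :=
  fun t => if s ≤ t then z t else y t

/-- Families of sets of paths from which a measurable flow can be selected; `S r` is the set of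
admissible paths starting at the time `r ∈ J`. Paths are defined at all times, those of `S r` being
constant up to `r`, so the restriction of `y` to the times after `s` is `fun t => y (max s t)`. -/
structure IsSelectionFamily {ι V : Type*} [LinearOrder ι] [TopologicalSpace V] [MeasurableSpace V]
    (J : Set ι) (S : ι → Set (ι → V)) : Prop where
  eq_start : ∀ ⦃r t : ι⦄, r ∈ J → t ≤ r → ∀ y ∈ S r, y t = y r
  restrict_mem : ∀ ⦃r s : ι⦄, r ∈ J → s ∈ J → r ≤ s → ∀ y ∈ S r, (fun t => y (max s t)) ∈ S s
  concatAt_mem : ∀ ⦃r s : ι⦄, r ∈ J → s ∈ J → r ≤ s → ∀ y ∈ S r, ∀ z ∈ S s, z s = y s →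
    concatAt s y z ∈ S r
  exists_mem : ∀ ⦃r : ι⦄, r ∈ J → ∀ a, ∃ y ∈ S r, y r = a
  isCompact_fiber : ∀ ⦃r : ι⦄, r ∈ J → ∀ a, IsCompact {y ∈ S r | y r = a}
  measurableSet_image : ∀ ⦃r : ι⦄, r ∈ J → ∀ F : Set (ι → V), IsClosed F →
    MeasurableSet (Function.eval r '' (S r ∩ F))

/-- The paths of `S r` that maximize `g` at time `τ` among those with the same starting point. -/
def maximizers {ι V : Type*} (S : ι → Set (ι → V)) (τ : ι) (g : V → ℝ) (r : ι) : Set (ι → V) :=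
  {y ∈ S r | ∀ z ∈ S r, z r = y r → g (z τ) ≤ g (y τ)}

/-- Successive maximization of `g 0` at time `τ 0`, then `g 1` at time `τ 1`, and so on. -/
def lexMaximizers {ι V : Type*} (S : ι → Set (ι → V)) (τ : ℕ → ι) (g : ℕ → V → ℝ) :
    ℕ → ι → Set (ι → V)
  | 0 => S
  | n + 1 => maximizers (lexMaximizers S τ g n) (τ n) (g n)

variable {ι V : Type*}

lemma antitone_lexMaximizers (S : ι → Set (ι → V)) (τ : ℕ → ι) (g : ℕ → V → ℝ) (r : ι) :
    Antitone fun n => lexMaximizers S τ g n r :=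
  antitone_nat_of_succ_le fun _ _ hy => hy.1

lemma eq_of_mem_iInter_lexMaximizers {S : ι → Set (ι → V)} {τ : ℕ → ι} {g : ℕ → V → ℝ} {r : ι}
    {y z : ι → V} (hy : y ∈ ⋂ n, lexMaximizers S τ g n r) (hz : z ∈ ⋂ n, lexMaximizers S τ g n r)
    (hyz : y r = z r) (n : ℕ) : g n (y (τ n)) = g n (z (τ n)) := by
  rw [mem_iInter] at hy hz
  exact le_antisymm ((hz (n + 1)).2 y (hy n) hyz) ((hy (n + 1)).2 z (hz n) hyz.symm)

variable [LinearOrder ι]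

lemma concatAt_of_le {s t : ι} (h : s ≤ t) (y z : ι → V) : concatAt s y z t = z t := if_pos h

lemma concatAt_of_lt {s t : ι} (h : t < s) (y z : ι → V) : concatAt s y z t = y t :=
  if_neg h.not_ge

lemma concatAt_of_ge {s t : ι} (h : t ≤ s) {y z : ι → V} (hzy : z s = y s) :
    concatAt s y z t = y t := by
  rcases h.eq_or_lt with rfl | h
  · rw [concatAt_of_le le_rfl, hzy]
  · exact concatAt_of_lt h y z

variable [TopologicalSpace V] [MeasurableSpace V] {J : Set ι} {S : ι → Set (ι → V)}

lemma IsSelectionFamily.image_maximizers_inter (hS : IsSelectionFamily J S) (τ : ι) {g : V → ℝ}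
    (hg : Continuous g) {r : ι} (hr : r ∈ J) {F : Set (ι → V)} (hF : IsClosed F) :
    Function.eval r '' (maximizers S τ g r ∩ F) = Function.eval r '' (S r ∩ F) ∩
      ⋂ c : ℚ, (Function.eval r '' (S r ∩ {y | c ≤ g (y τ)}))ᶜ ∪
        Function.eval r '' (S r ∩ (F ∩ {y | c ≤ g (y τ)})) := by
  ext a
  simp only [mem_inter_iff, mem_iInter, mem_union, mem_compl_iff, ← imp_iff_not_or]
  constructor
  · rintro ⟨y, ⟨⟨hyS, hy⟩, hyF⟩, rfl⟩
    refine ⟨⟨y, ⟨hyS, hyF⟩, rfl⟩, fun c => ?_⟩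
    rintro ⟨z, ⟨hzS, hcz⟩, hzy⟩
    exact ⟨y, ⟨hyS, hyF, le_trans hcz (hy z hzS hzy)⟩, rfl⟩
  · rintro ⟨⟨x, ⟨hxS, hxF⟩, hxa⟩, hc⟩
    obtain ⟨y, ⟨⟨hyS, hya⟩, hyF⟩, hy⟩ := ((hS.isCompact_fiber hr a).inter_right hF).exists_isMaxOn
      ⟨x, ⟨hxS, hxa⟩, hxF⟩ (hg.comp (continuous_apply τ)).continuousOn
    refine ⟨y, ⟨⟨hyS, fun z hzS hzy => ?_⟩, hyF⟩, hya⟩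
    by_contra! hlt
    obtain ⟨c, hyc, hcz⟩ := exists_rat_btwn hlt
    obtain ⟨w, ⟨hwS, hwF, hcw⟩, hwa⟩ := hc c ⟨z, ⟨hzS, hcz.le⟩, hzy.trans hya⟩
    exact (hyc.trans_le (le_trans hcw (hy ⟨⟨hwS, hwa⟩, hwF⟩))).false

lemma IsSelectionFamily.maximizers (hS : IsSelectionFamily J S) (τ : ι) {g : V → ℝ}
    (hg : Continuous g) : IsSelectionFamily J (maximizers S τ g) where
  eq_start _ _ hr htr y hy := hS.eq_start hr htr y hy.1
  restrict_mem r s hr hs hrs y := by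
    rintro ⟨hyS, hy⟩
    refine ⟨hS.restrict_mem hr hs hrs y hyS, fun z hz hzy => ?_⟩
    replace hzy : z s = y s := hzy.trans (congrArg y (max_self s))
    rcases le_or_gt s τ with hsτ | hτs
    · simpa only [concatAt_of_le hsτ, max_eq_right hsτ] using
        hy _ (hS.concatAt_mem hr hs hrs y hyS z hz hzy) (concatAt_of_ge hrs hzy)
    · simp only [hS.eq_start hs hτs.le z hz, hzy, max_eq_left hτs.le, le_refl]
  concatAt_mem r s hr hs hrs y := by
    rintro ⟨hyS, hy⟩ z ⟨hzS, hz⟩ hzy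
    refine ⟨hS.concatAt_mem hr hs hrs y hyS z hzS hzy, fun w hw hwr => ?_⟩
    have hwy : g (w τ) ≤ g (y τ) := hy w hw (hwr.trans (concatAt_of_ge hrs hzy))
    rcases le_or_gt s τ with hsτ | hτs
    · have := hz _ (hS.restrict_mem hr hs hrs y hyS) ((congrArg y (max_self s)).trans hzy.symm)
      rw [max_eq_right hsτ] at this
      exact (concatAt_of_le hsτ y z).symm ▸ hwy.trans this
    · exact (concatAt_of_lt hτs y z).symm ▸ hwy
  exists_mem r hr a := by
    obtain ⟨x, hx⟩ := hS.exists_mem hr a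
    obtain ⟨y, ⟨hyS, rfl⟩, hy⟩ := (hS.isCompact_fiber hr a).exists_isMaxOn ⟨x, hx⟩
      (hg.comp (continuous_apply τ)).continuousOn
    exact ⟨y, ⟨hyS, fun z hz hzy => hy ⟨hz, hzy⟩⟩, rfl⟩
  isCompact_fiber r hr a := by
    have hclosed : IsClosed {y : ι → V | ∀ z ∈ S r, z r = a → g (z τ) ≤ g (y τ)} := by
      simp only [ofPred_forall]
      exact isClosed_iInter fun z => isClosed_iInter fun _ => isClosed_iInter fun _ =>
        isClosed_le continuous_const (by fun_prop)
    convert (hS.isCompact_fiber hr a).inter_right hclosed using 1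
    ext y
    constructor
    · rintro ⟨⟨hyS, hy⟩, rfl⟩
      exact ⟨⟨hyS, rfl⟩, hy⟩
    · rintro ⟨⟨hyS, rfl⟩, hy⟩
      exact ⟨⟨hyS, hy⟩, rfl⟩
  measurableSet_image r hr F hF := by
    have hclosed (c : ℚ) : IsClosed {y : ι → V | c ≤ g (y τ)} :=
      isClosed_le continuous_const (by fun_prop)
    rw [hS.image_maximizers_inter τ hg hr hF]
    exact (hS.measurableSet_image hr F hF).inter <| .iInter fun c =>
      (hS.measurableSet_image hr _ (hclosed c)).compl.union
        (hS.measurableSet_image hr _ (hF.inter (hclosed c)))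

lemma IsSelectionFamily.lexMaximizers (hS : IsSelectionFamily J S) (τ : ℕ → ι) {g : ℕ → V → ℝ}
    (hg : ∀ n, Continuous (g n)) (n : ℕ) : IsSelectionFamily J (lexMaximizers S τ g n) := by
  induction n with
  | zero => exact hS
  | succ n ih => exact ih.maximizers (τ n) (hg n)

lemma IsSelectionFamily.image_iInter_inter [T2Space V] {S : ℕ → ι → Set (ι → V)}
    (hS : ∀ n, IsSelectionFamily J (S n)) (hanti : ∀ r, Antitone fun n => S n r) {r : ι}
    (hr : r ∈ J) {F : Set (ι → V)} (hF : IsClosed F) :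
    Function.eval r '' ((⋂ n, S n r) ∩ F) = ⋂ n, Function.eval r '' (S n r ∩ F) := by
  ext a
  constructor
  · rintro ⟨y, ⟨hy, hyF⟩, rfl⟩
    exact mem_iInter.2 fun n => ⟨y, ⟨mem_iInter.1 hy n, hyF⟩, rfl⟩
  · intro ha
    have hcompact (n : ℕ) : IsCompact ({y ∈ S n r | y r = a} ∩ F) :=
      ((hS n).isCompact_fiber hr a).inter_right hF
    obtain ⟨y, hy⟩ := IsCompact.nonempty_iInter_of_sequence_nonempty_isCompact_isClosed
      (fun n => {y ∈ S n r | y r = a} ∩ F)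
      (fun n => inter_subset_inter_left F fun y hy => ⟨hanti r n.le_succ hy.1, hy.2⟩)
      (fun n => let ⟨y, hy, hya⟩ := mem_iInter.1 ha n; ⟨y, ⟨hy.1, hya⟩, hy.2⟩)
      (hcompact 0) (fun n => (hcompact n).isClosed)
    rw [mem_iInter] at hy
    exact ⟨y, ⟨mem_iInter.2 fun n => (hy n).1.1, (hy 0).2⟩, (hy 0).1.2⟩

lemma IsSelectionFamily.iInter [T2Space V] {S : ℕ → ι → Set (ι → V)}
    (hS : ∀ n, IsSelectionFamily J (S n)) (hanti : ∀ r, Antitone fun n => S n r) :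
    IsSelectionFamily J fun r => ⋂ n, S n r where
  eq_start _ _ hr htr y hy := (hS 0).eq_start hr htr y (mem_iInter.1 hy 0)
  restrict_mem _ _ hr hs hrs y hy :=
    mem_iInter.2 fun n => (hS n).restrict_mem hr hs hrs y (mem_iInter.1 hy n)
  concatAt_mem _ _ hr hs hrs y hy z hz hzy :=
    mem_iInter.2 fun n =>
      (hS n).concatAt_mem hr hs hrs y (mem_iInter.1 hy n) z (mem_iInter.1 hz n) hzy
  exists_mem r hr a := by
    have ha : a ∈ ⋂ n, Function.eval r '' (S n r ∩ univ) := mem_iInter.2 fun n =>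
      let ⟨y, hy, hya⟩ := (hS n).exists_mem hr a; ⟨y, ⟨hy, mem_univ y⟩, hya⟩
    rw [← image_iInter_inter hS hanti hr isClosed_univ] at ha
    obtain ⟨y, ⟨hy, -⟩, hya⟩ := ha
    exact ⟨y, hy, hya⟩
  isCompact_fiber r hr a := by
    have hclosed : IsClosed (⋂ n, {y ∈ S n r | y r = a}) :=
      isClosed_iInter fun n => ((hS n).isCompact_fiber hr a).isClosed
    convert ((hS 0).isCompact_fiber hr a).of_isClosed_subset hclosed (iInter_subset _ 0) using 1
    ext y
    simp only [mem_ofPred_eq, mem_iInter, forall_and, forall_const]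
  measurableSet_image r hr F hF := by
    rw [image_iInter_inter hS hanti hr hF]
    exact .iInter fun n => (hS n).measurableSet_image hr F hF

lemma IsSelectionFamily.exists_flow_of_unique [BorelSpace V] (hS : IsSelectionFamily J S)
    (huniq : ∀ r ∈ J, ∀ y ∈ S r, ∀ z ∈ S r, y r = z r → y = z) :
    ∃ ψ : ι → ι → V → V, (∀ t ∈ J, ∀ a, ψ t t a = a) ∧
      (∀ r ∈ J, ∀ s ∈ J, ∀ t, r ≤ s → s ≤ t → ∀ a, ψ t s (ψ s r a) = ψ t r a) ∧
      (∀ s ∈ J, ∀ t, Measurable (ψ t s)) ∧ ∀ r ∈ J, ∀ a, (fun t => ψ t r a) ∈ S r := by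
  have hsol : ∀ r a, ∃ y : ι → V, r ∈ J → y ∈ S r ∧ y r = a := fun r a => by
    by_cases hr : r ∈ J
    · exact (hS.exists_mem hr a).imp fun _ hy _ => hy
    · exact ⟨fun _ => a, fun h => absurd h hr⟩
  choose y hy using hsol
  refine ⟨fun t s a => y s a t, fun t ht a => (hy t a ht).2, fun r hr s hs t hrs hst a => ?_,
    fun s hs t => measurable_of_isClosed fun F hF => ?_, fun r hr a => (hy r a hr).1⟩
  · have hrestrict := hS.restrict_mem hr hs hrs _ (hy r a hr).1
    have := huniq s hs _ (hy s (y r a s) hs).1 _ hrestrict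
      ((hy s _ hs).2.trans (congrArg (y r a) (max_self s)).symm)
    simp only [this, max_eq_right hst]
  · convert hS.measurableSet_image hs _ (hF.preimage (continuous_apply t)) using 1
    ext a
    constructor
    · exact fun ha => ⟨y s a, ⟨(hy s a hs).1, ha⟩, (hy s a hs).2⟩
    · rintro ⟨z, ⟨hz, hzF⟩, rfl⟩
      rw [huniq s hs z hz _ (hy s _ hs).1 (hy s _ hs).2.symm] at hzF
      exact hzF

theorem IsSelectionFamily.exists_flow [T2Space V] [BorelSpace V] (hS : IsSelectionFamily J S)
    {τ : ℕ → ι} {g : ℕ → V → ℝ} (hg : ∀ n, Continuous (g n))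
    (hsep : ∀ r ∈ J, ∀ y ∈ S r, ∀ z ∈ S r, y r = z r →
      (∀ n, g n (y (τ n)) = g n (z (τ n))) → y = z) :
    ∃ ψ : ι → ι → V → V, (∀ t ∈ J, ∀ a, ψ t t a = a) ∧
      (∀ r ∈ J, ∀ s ∈ J, ∀ t, r ≤ s → s ≤ t → ∀ a, ψ t s (ψ s r a) = ψ t r a) ∧
      (∀ s ∈ J, ∀ t, Measurable (ψ t s)) ∧ ∀ r ∈ J, ∀ a, (fun t => ψ t r a) ∈ S r := by
  have hlex : IsSelectionFamily J fun r => ⋂ n, _root_.lexMaximizers S τ g n r :=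
    .iInter (hS.lexMaximizers τ hg) (antitone_lexMaximizers S τ g)
  obtain ⟨ψ, hψ_id, hψ_flow, hψ_meas, hψ_mem⟩ :=
    hlex.exists_flow_of_unique fun r hr y hy z hz hyz =>
      hsep r hr y (mem_iInter.1 hy 0) z (mem_iInter.1 hz 0) hyz
        (eq_of_mem_iInter_lexMaximizers hy hz hyz)
  exact ⟨ψ, hψ_id, hψ_flow, hψ_meas, fun r hr a => mem_iInter.1 (hψ_mem r hr a) 0⟩

end Selection

/-! ### Controls and remainders -/

section ControlRemainder

open Filter Topology
open scoped NNReal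

variable {T κ : ℝ} {ω : ℝ → ℝ → ℝ} {ϖ : ℝ → ℝ}

lemma IsControl.mono (hω : IsControl T ω) {a b c d : ℝ} (ha : 0 ≤ a) (hab : a ≤ b) (hbc : b ≤ c)
    (hcd : c ≤ d) (hd : d ≤ T) : ω b c ≤ ω a d := by
  have hac := hω.superadd ha hab hbc (hcd.trans hd)
  have had := hω.superadd ha (hab.trans hbc) hcd hd
  have hω_ab := hω.nonneg ha hab (hbc.trans (hcd.trans hd))
  have hω_cd := hω.nonneg (ha.trans (hab.trans hbc)) hcd hd
  linarith

lemma IsControl.exists_consecutive_midpoint (hω : IsControl T ω) {F : Finset ℝ}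
    (hF : ↑F ⊆ Icc 0 T) {s t : ℝ} (hs : s ∈ F) (ht : t ∈ F) (hst : s < t) :
    ∃ u ∈ F, ∃ v ∈ F, s ≤ u ∧ u < v ∧ v ≤ t ∧ (∀ w ∈ F, w ≤ u ∨ v ≤ w) ∧
      ω s u ≤ ω s t / 2 ∧ ω v t ≤ ω s t / 2 := by
  have hs0 : 0 ≤ s := (hF hs).1
  have htT : t ≤ T := (hF ht).2
  have hω_st := hω.nonneg hs0 hst.le htT
  obtain ⟨u, hu, hu_max⟩ := {x ∈ F | s ≤ x ∧ x < t ∧ ω s x ≤ ω s t / 2}.exists_max_image id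
    ⟨s, by simp only [Finset.mem_filter]
           exact ⟨hs, le_rfl, hst, by rw [hω.diag hs0 (hst.le.trans htT)]; positivity⟩⟩
  obtain ⟨v, hv, hv_min⟩ := {x ∈ F | u < x}.exists_min_image id
    ⟨t, by simp only [Finset.mem_filter] at hu ⊢; exact ⟨ht, hu.2.2.1⟩⟩
  simp only [Finset.mem_filter, id_eq, and_imp] at hu hu_max hv hv_min
  obtain ⟨huF, hsu, hut, hω_su⟩ := hu
  obtain ⟨hvF, huv⟩ := hv
  have hvt : v ≤ t := hv_min t ht hut
  refine ⟨u, huF, v, hvF, hsu, huv, hvt, fun w hw => ?_, hω_su, ?_⟩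
  · exact (le_or_gt w u).imp_right (hv_min w hw)
  · rcases hvt.eq_or_lt with rfl | hvt'
    · rw [hω.diag (hs0.trans hst.le) htT]; positivity
    · have hω_sv : ω s t / 2 < ω s v := by
        by_contra! h
        exact huv.not_ge (hu_max v hvF (hsu.trans huv.le) hvt' h)
      have := hω.superadd hs0 (hsu.trans huv.le) hvt htT
      linarith

lemma IsControl.exists_near_midpoint (hω : IsControl T ω) {s t d : ℝ} (hs : 0 ≤ s) (hst : s ≤ t)
    (ht : t ≤ T) (hd : 0 < d) :
    ∃ u v, s ≤ u ∧ u ≤ v ∧ v ≤ t ∧ v - u ≤ d ∧ ω s u ≤ ω s t / 2 ∧ ω v t ≤ ω s t / 2 := by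
  have hω_st := hω.nonneg hs hst ht
  let A : Set ℝ := {u | s ≤ u ∧ u ≤ t ∧ ω s u ≤ ω s t / 2}
  have hA : BddAbove A := ⟨t, fun u hu => hu.2.1⟩
  have hsA : s ∈ A := ⟨le_rfl, hst, by rw [hω.diag hs (hst.trans ht)]; positivity⟩
  obtain ⟨u, huA, hu⟩ := exists_lt_of_lt_csSup ⟨s, hsA⟩ (sub_lt_self (sSup A) (half_pos hd))
  have hu_sup : u ≤ sSup A := le_csSup hA huA
  obtain ⟨hsu, hut, hω_su⟩ := huA
  rcases le_or_gt (sSup A + d / 2) t with hvt | htv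
  · refine ⟨u, sSup A + d / 2, hsu, by linarith, hvt, by linarith, hω_su, ?_⟩
    have hsv : s ≤ sSup A + d / 2 := by linarith
    have hω_sv : ω s t / 2 < ω s (sSup A + d / 2) := by
      by_contra! h
      linarith [le_csSup hA (show sSup A + d / 2 ∈ A from ⟨hsv, hvt, h⟩)]
    linarith [hω.superadd hs hsv hvt ht]
  · refine ⟨u, t, hsu, hut, le_rfl, by linarith, hω_su, ?_⟩
    rw [hω.diag (hs.trans hst) ht]
    positivity

lemma IsRemainder.mono (hϖ : IsRemainder κ ϖ) {x y : ℝ} (hx : 0 ≤ x) (hxy : x ≤ y) : ϖ x ≤ ϖ y :=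
  hϖ.strictMonoOn.monotoneOn hx (hx.trans hxy) hxy

lemma IsRemainder.ratio_pos (hϖ : IsRemainder κ ϖ) : 0 < κ := by
  have h₁ : 0 < ϖ 1 :=
    (hϖ.nonneg 0 le_rfl).trans_lt
      (hϖ.strictMonoOn self_mem_Ici (mem_Ici.2 zero_le_one) zero_lt_one)
  have h₂ : 2 * ϖ 1 ≤ κ * ϖ 2 := by simpa using hϖ.doubling 2 two_pos
  exact pos_of_mul_pos_left (by linarith) (hϖ.nonneg 2 zero_le_two)

lemma IsRemainder.map_zero (hϖ : IsRemainder κ ϖ) (hκ : κ < 2) : ϖ 0 = 0 := by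
  have hcont : Tendsto ϖ (𝓝[>] 0) (𝓝 (ϖ 0)) :=
    (hϖ.contOn 0 self_mem_Ici).mono_left (nhdsWithin_mono _ Ioi_subset_Ici_self)
  have hhalf : Tendsto (fun x : ℝ => x / 2) (𝓝[>] 0) (𝓝[>] 0) :=
    tendsto_nhdsWithin_of_tendsto_nhds_of_eventually_within _
      ((Continuous.tendsto' (by fun_prop) 0 0 (by simp)).mono_left nhdsWithin_le_nhds)
      (eventually_mem_nhdsWithin.mono fun _ hx => half_pos (mem_Ioi.1 hx))
  have hle : 2 * ϖ 0 ≤ κ * ϖ 0 :=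
    le_of_tendsto_of_tendsto ((hcont.comp hhalf).const_mul 2) (hcont.const_mul κ)
      (eventually_mem_nhdsWithin.mono fun x hx => hϖ.doubling x hx)
  nlinarith [hϖ.nonneg 0 le_rfl]

lemma IsRemainder.ratio_lt_two (hϖ : IsRemainder κ ϖ) {D : ℝ≥0} (hκD : κ * (1 + D) < 2) :
    κ < 2 :=
  (le_mul_of_one_le_right hϖ.ratio_pos.le (by simp)).trans_lt hκD

lemma IsRemainder.one_add_mul_half_le (hϖ : IsRemainder κ ϖ) (hκ : κ < 2) (D : ℝ≥0) {x : ℝ}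
    (hx : 0 ≤ x) : (1 + D) * ϖ (x / 2) ≤ κ * (1 + D) / 2 * ϖ x := by
  have hdoubling : 2 * ϖ (x / 2) ≤ κ * ϖ x := by
    rcases hx.eq_or_lt with rfl | hx'
    · simp [hϖ.map_zero hκ]
    · exact hϖ.doubling x hx'
  linarith [mul_le_mul_of_nonneg_left hdoubling (show 0 ≤ (1 + D : ℝ) / 2 by positivity)]

lemma IsRemainder.comp_control_nonneg (hϖ : IsRemainder κ ϖ) (hω : IsControl T ω) {s t : ℝ}
    (hs : 0 ≤ s) (hst : s ≤ t) (ht : t ≤ T) : 0 ≤ ϖ (ω s t) :=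
  hϖ.nonneg _ (hω.nonneg hs hst ht)

lemma IsRemainder.comp_control_mono (hϖ : IsRemainder κ ϖ) (hω : IsControl T ω) {a b c d : ℝ}
    (ha : 0 ≤ a) (hab : a ≤ b) (hbc : b ≤ c) (hcd : c ≤ d) (hd : d ≤ T) :
    ϖ (ω b c) ≤ ϖ (ω a d) :=
  hϖ.mono (hω.nonneg (ha.trans hab) hbc (hcd.trans hd)) (hω.mono ha hab hbc hcd hd)

lemma IsRemainder.exists_comp_control_lt (hϖ : IsRemainder κ ϖ) (hκ : κ < 2)
    (hω : IsControl T ω) {ε : ℝ} (hε : 0 < ε) :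
    ∃ d > 0, ∀ ⦃s t : ℝ⦄, 0 ≤ s → s ≤ t → t ≤ T → t - s ≤ d → ϖ (ω s t) < ε := by
  have hlim : Tendsto ϖ (𝓝[≥] 0) (𝓝 0) := by
    simpa only [hϖ.map_zero hκ] using (hϖ.contOn 0 self_mem_Ici).tendsto
  obtain ⟨η, hη, hϖη⟩ := mem_nhdsGE_iff_exists_Ico_subset.1 (hlim.eventually_lt_const hε)
  obtain ⟨d, hd, hωd⟩ := hω.small η hη
  exact ⟨d, hd, fun s t hs hst ht htd =>
    hϖη ⟨hω.nonneg hs hst ht, hωd hs hst ht htd⟩⟩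

end ControlRemainder

/-! ### D-solutions of an almost flow -/

section AlmostFlow

open Filter Topology Metric
open scoped NNReal

/-- Almost flows on the time interval `[0, T]` in a metric space: the maps `φ t s` are Lipschitz
with a common constant `D`, and the defect in the flow property from the point `a` is at most
`N a * ϖ (ω r t)`. Nothing is required outside `0 ≤ s ≤ t ≤ T`. -/
structure IsAlmostFlow {V : Type*} [PseudoMetricSpace V] (T : ℝ) (ω : ℝ → ℝ → ℝ) (ϖ : ℝ → ℝ)
    (N : V → ℝ) (D : ℝ≥0) (φ : ℝ → ℝ → V → V) : Prop where
  self_apply : ∀ ⦃t : ℝ⦄, 0 ≤ t → t ≤ T → ∀ a, φ t t a = a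
  lipschitzWith : ∀ ⦃s t : ℝ⦄, 0 ≤ s → s ≤ t → t ≤ T → LipschitzWith D (φ t s)
  dist_comp_le : ∀ ⦃r s t : ℝ⦄, 0 ≤ r → r ≤ s → s ≤ t → t ≤ T → ∀ a,
    dist (φ t s (φ s r a)) (φ t r a) ≤ N a * ϖ (ω r t)

/-- D-solutions on `[r, T]` with constant `K`: paths whose increments follow the almost flow `φ` up
to an error controlled by `ϖ ∘ ω`. In contrast to `Gpaths`, the horizon `T` is the same for all
starting times `r`, the starting point is free, and continuity is not part of the definition. -/
def IsDSolution {V : Type*} [PseudoMetricSpace V] (φ : ℝ → ℝ → V → V) (ω : ℝ → ℝ → ℝ) (ϖ : ℝ → ℝ)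
    (K r T : ℝ) (y : ℝ → V) : Prop :=
  ∀ ⦃s t : ℝ⦄, r ≤ s → s ≤ t → t ≤ T → dist (y t) (φ t s (y s)) ≤ K * ϖ (ω s t)

/-- Euler schemes along a finite set of times `F`: between consecutive times of `F` the path `y`
follows `φ` exactly. -/
def IsEulerScheme {V : Type*} (φ : ℝ → ℝ → V → V) (F : Finset ℝ) (y : ℝ → V) : Prop :=
  ∀ ⦃s t : ℝ⦄, s ∈ F → t ∈ F → s < t → (∀ u ∈ F, u ≤ s ∨ t ≤ u) → y t = φ t s (y s)

/-- The fixed point of `K ↦ κ(1 + D)/2 * K + 2M`, the improvement of the constant of a D-solution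
obtained by halving the control. -/
def sewingConst (κ : ℝ) (D : ℝ≥0) (M : ℝ) : ℝ :=
  2 * M / (1 - κ * (1 + D) / 2)

variable {T κ M K r : ℝ} {D : ℝ≥0} {ω : ℝ → ℝ → ℝ} {ϖ : ℝ → ℝ}

lemma sewingConst_nonneg (hM : 0 ≤ M) (hκD : κ * (1 + D) < 2) : 0 ≤ sewingConst κ D M :=
  div_nonneg (by positivity) (by linarith)

lemma sewingConst_isFixed (hκD : κ * (1 + D) < 2) :
    κ * (1 + D) / 2 * sewingConst κ D M + 2 * M = sewingConst κ D M := by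
  have : (1 - κ * (1 + D) / 2) * sewingConst κ D M = 2 * M := mul_div_cancel₀ _ (by linarith)
  linarith

lemma exists_isEulerScheme {V : Type*} (φ : ℝ → ℝ → V → V) (r : ℝ) (a : V) (F : Finset ℝ)
    (hF : ∀ t ∈ F, r < t) : ∃ y : ℝ → V, y r = a ∧ IsEulerScheme φ (insert r F) y := by
  induction F using Finset.induction_on_max with
  | empty =>
    refine ⟨fun _ => a, rfl, fun s t hs ht hst => ?_⟩
    simp only [insert_empty_eq, Finset.mem_singleton] at hs ht
    exact absurd hst (by simp [hs, ht])
  | insert m F hm ih =>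
    obtain ⟨y, hyr, hy⟩ := ih fun t ht => hF t (Finset.mem_insert_of_mem ht)
    have hm' : ∀ x ∈ insert r F, x < m :=
      Finset.forall_mem_insert _ _ _ |>.2 ⟨hF m (Finset.mem_insert_self m F), hm⟩
    obtain ⟨p, hpF, hp_max⟩ := (insert r F).exists_max_image id (Finset.insert_nonempty r F)
    rw [Finset.insert_comm]
    refine ⟨Function.update y m (φ m p (y p)), ?_, fun s t hs ht hst hcons => ?_⟩
    · rw [Function.update_of_ne (hm' r (Finset.mem_insert_self r F)).ne, hyr]
    · have hsF : s ∈ insert r F := by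
        refine (Finset.mem_insert.1 hs).resolve_left fun hsm => ?_
        rcases Finset.mem_insert.1 ht with rfl | ht
        · exact hst.ne hsm
        · exact (hm' t ht).not_gt (hsm ▸ hst)
      rw [Function.update_of_ne (hm' s hsF).ne]
      rcases Finset.mem_insert.1 ht with rfl | htF
      · have hps : p ≤ s := (hcons p (Finset.mem_insert_of_mem hpF)).resolve_right
          (hm' p hpF).not_ge
        rw [Function.update_self, hps.antisymm (hp_max s hsF)]
      · rw [Function.update_of_ne (hm' t htF).ne]
        exact hy hsF htF hst fun u hu => hcons u (Finset.mem_insert_of_mem hu)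

section PseudoMetric

variable {V : Type*} [PseudoMetricSpace V] {N : V → ℝ} {φ : ℝ → ℝ → V → V}

lemma IsAlmostFlow.mono_weight (hφ : IsAlmostFlow T ω ϖ N D φ) (hϖ : IsRemainder κ ϖ)
    (hω : IsControl T ω) {N' : V → ℝ} (hN : ∀ a, N a ≤ N' a) : IsAlmostFlow T ω ϖ N' D φ where
  self_apply := hφ.self_apply
  lipschitzWith := hφ.lipschitzWith
  dist_comp_le _ _ _ hr hrs hst ht a := (hφ.dist_comp_le hr hrs hst ht a).trans <|
    mul_le_mul_of_nonneg_right (hN a) (hϖ.comp_control_nonneg hω hr (hrs.trans hst) ht)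

lemma IsAlmostFlow.dist_le_add (hφ : IsAlmostFlow T ω ϖ N D φ) {s u t : ℝ} (hs : 0 ≤ s)
    (hsu : s ≤ u) (hut : u ≤ t) (ht : t ≤ T) (x y z : V) :
    dist z (φ t s x) ≤ dist z (φ t u y) + D * dist y (φ u s x) + N x * ϖ (ω s t) := by
  calc dist z (φ t s x)
      ≤ dist z (φ t u y) + dist (φ t u y) (φ t u (φ u s x)) + dist (φ t u (φ u s x)) (φ t s x) :=
        dist_triangle4 _ _ _ _
    _ ≤ dist z (φ t u y) + D * dist y (φ u s x) + N x * ϖ (ω s t) := by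
        gcongr
        · exact (hφ.lipschitzWith (hs.trans hsu) hut ht).dist_le_mul y (φ u s x)
        · exact hφ.dist_comp_le hs hsu hut ht x

lemma IsAlmostFlow.dist_le_of_midpoint (hφ : IsAlmostFlow T ω ϖ (fun _ => M) D φ)
    (hω : IsControl T ω) (hϖ : IsRemainder κ ϖ) (hκ : κ < 2) (hM : 0 ≤ M) (hK : 0 ≤ K) {y : ℝ → V}
    {s u v t : ℝ} (hs : 0 ≤ s) (hsu : s ≤ u) (huv : u ≤ v) (hvt : v ≤ t) (ht : t ≤ T)
    (hω_su : ω s u ≤ ω s t / 2) (hω_vt : ω v t ≤ ω s t / 2)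
    (hy_su : dist (y u) (φ u s (y s)) ≤ K * ϖ (ω s u))
    (hy_vt : dist (y t) (φ t v (y v)) ≤ K * ϖ (ω v t)) :
    dist (y t) (φ t s (y s)) ≤
      (κ * (1 + D) / 2 * K + 2 * M) * ϖ (ω s t) + D * dist (y v) (φ v u (y u)) := by
  have hu : 0 ≤ u := hs.trans hsu
  have hut : u ≤ t := huv.trans hvt
  have hϖ_su : ϖ (ω s u) ≤ ϖ (ω s t / 2) :=
    hϖ.mono (hω.nonneg hs hsu (hut.trans ht)) hω_su
  have hϖ_vt : ϖ (ω v t) ≤ ϖ (ω s t / 2) := hϖ.mono (hω.nonneg (hu.trans huv) hvt ht) hω_vt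
  have hϖ_ut : ϖ (ω u t) ≤ ϖ (ω s t) := hϖ.comp_control_mono hω hs hsu hut le_rfl ht
  calc dist (y t) (φ t s (y s))
      ≤ dist (y t) (φ t u (y u)) + D * dist (y u) (φ u s (y s)) + M * ϖ (ω s t) :=
        hφ.dist_le_add hs hsu hut ht _ _ _
    _ ≤ (dist (y t) (φ t v (y v)) + D * dist (y v) (φ v u (y u)) + M * ϖ (ω u t))
          + D * dist (y u) (φ u s (y s)) + M * ϖ (ω s t) := by
        gcongr; exact hφ.dist_le_add hu huv hvt ht _ _ _
    _ ≤ (K * ϖ (ω s t / 2) + D * dist (y v) (φ v u (y u)) + M * ϖ (ω s t))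
          + D * (K * ϖ (ω s t / 2)) + M * ϖ (ω s t) := by
        gcongr
        · exact hy_vt.trans (by gcongr)
        · exact hy_su.trans (by gcongr)
    _ = K * ((1 + D) * ϖ (ω s t / 2)) + 2 * M * ϖ (ω s t) + D * dist (y v) (φ v u (y u)) := by
        ring
    _ ≤ K * (κ * (1 + D) / 2 * ϖ (ω s t)) + 2 * M * ϖ (ω s t)
          + D * dist (y v) (φ v u (y u)) := by
        gcongr K * ?_ + _ + _
        exact hϖ.one_add_mul_half_le hκ D (hω.nonneg hs (hsu.trans hut) ht)
    _ = (κ * (1 + D) / 2 * K + 2 * M) * ϖ (ω s t) + D * dist (y v) (φ v u (y u)) := by ring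

lemma IsEulerScheme.dist_le (hφ : IsAlmostFlow T ω ϖ (fun _ => M) D φ) (hω : IsControl T ω)
    (hϖ : IsRemainder κ ϖ) (hM : 0 ≤ M) (hκD : κ * (1 + D) < 2) {F : Finset ℝ}
    (hF : ↑F ⊆ Icc 0 T) {y : ℝ → V} (hy : IsEulerScheme φ F y) {s t : ℝ} (hs : s ∈ F) (ht : t ∈ F)
    (hst : s ≤ t) : dist (y t) (φ t s (y s)) ≤ sewingConst κ D M * ϖ (ω s t) := by
  have hL := sewingConst_nonneg hM hκD
  induction hn : {x ∈ F | s ≤ x ∧ x ≤ t}.card using Nat.strong_induction_on generalizing s t with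
  | _ n ih =>
    subst hn
    rcases hst.eq_or_lt with rfl | hst'
    · rw [hφ.self_apply (hF hs).1 (hF hs).2, dist_self]
      exact mul_nonneg hL (hϖ.comp_control_nonneg hω (hF hs).1 le_rfl (hF hs).2)
    obtain ⟨u, hu, v, hv, hsu, huv, hvt, hcons, hω_su, hω_vt⟩ :=
      hω.exists_consecutive_midpoint hF hs ht hst'
    have hcard_su : {x ∈ F | s ≤ x ∧ x ≤ u}.card < {x ∈ F | s ≤ x ∧ x ≤ t}.card := by
      refine Finset.card_lt_card (Finset.ssubset_iff_of_subset ?_ |>.2 ⟨t, ?_⟩)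
      · exact Finset.monotone_filter_right F fun x _ hx => ⟨hx.1, hx.2.trans (huv.le.trans hvt)⟩
      · simp [ht, hst, huv.trans_le hvt]
    have hcard_vt : {x ∈ F | v ≤ x ∧ x ≤ t}.card < {x ∈ F | s ≤ x ∧ x ≤ t}.card := by
      refine Finset.card_lt_card (Finset.ssubset_iff_of_subset ?_ |>.2 ⟨s, ?_⟩)
      · exact Finset.monotone_filter_right F fun x _ hx => ⟨(hsu.trans huv.le).trans hx.1, hx.2⟩
      · simp [hs, hst, hsu.trans_lt huv]
    have := hφ.dist_le_of_midpoint hω hϖ (hϖ.ratio_lt_two hκD) hM hL (hF hs).1 hsu huv.le hvt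
      (hF ht).2 hω_su hω_vt (ih _ hcard_su hs hu hsu rfl) (ih _ hcard_vt hv ht hvt rfl)
    rwa [hy hu hv huv hcons, dist_self, mul_zero, add_zero, sewingConst_isFixed hκD] at this

lemma IsDSolution.mono_const {K' : ℝ} {y : ℝ → V} (hy : IsDSolution φ ω ϖ K r T y)
    (hω : IsControl T ω) (hϖ : IsRemainder κ ϖ) (hr : 0 ≤ r) (hK : K ≤ K') :
    IsDSolution φ ω ϖ K' r T y := fun _ _ hrs hst ht =>
  (hy hrs hst ht).trans <|
    mul_le_mul_of_nonneg_right hK (hϖ.comp_control_nonneg hω (hr.trans hrs) hst ht)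

lemma IsDSolution.improve_const (hφ : IsAlmostFlow T ω ϖ (fun _ => M) D φ) (hω : IsControl T ω)
    (hϖ : IsRemainder κ ϖ) (hκ : κ < 2) (hM : 0 ≤ M) (hr : 0 ≤ r) (hK : 0 ≤ K) {y : ℝ → V}
    (hy : IsDSolution φ ω ϖ K r T y) :
    IsDSolution φ ω ϖ (κ * (1 + D) / 2 * K + 2 * M) r T y := by
  intro s t hrs hst ht
  have hs : 0 ≤ s := hr.trans hrs
  refine le_of_forall_pos_le_add fun ε hε => ?_
  obtain ⟨d, hd, hsmall⟩ := hϖ.exists_comp_control_lt hκ hω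
    (show 0 < ε / (D * K + 1) by positivity)
  obtain ⟨u, v, hsu, huv, hvt, hvu, hω_su, hω_vt⟩ := hω.exists_near_midpoint hs hst ht hd
  have hgap : D * dist (y v) (φ v u (y u)) ≤ ε := by
    calc D * dist (y v) (φ v u (y u))
        ≤ D * (K * ϖ (ω u v)) := by gcongr; exact hy (hrs.trans hsu) huv (hvt.trans ht)
      _ ≤ D * (K * (ε / (D * K + 1))) := by
          gcongr; exact (hsmall (hs.trans hsu) huv (hvt.trans ht) hvu).le
      _ = D * K / (D * K + 1) * ε := by ring
      _ ≤ ε := mul_le_of_le_one_left hε.le (div_le_one_of_le₀ (by linarith) (by positivity))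
  exact (hφ.dist_le_of_midpoint hω hϖ hκ hM hK hs hsu huv hvt ht hω_su hω_vt
    (hy hrs hsu (huv.trans (hvt.trans ht)))
    (hy (hrs.trans (hsu.trans huv)) hvt ht)).trans (by gcongr)

lemma IsDSolution.to_sewingConst (hφ : IsAlmostFlow T ω ϖ (fun _ => M) D φ) (hω : IsControl T ω)
    (hϖ : IsRemainder κ ϖ) (hM : 0 ≤ M) (hκD : κ * (1 + D) < 2) (hr : 0 ≤ r) (hK : 0 ≤ K)
    {y : ℝ → V} (hy : IsDSolution φ ω ϖ K r T y) :
    IsDSolution φ ω ϖ (sewingConst κ D M) r T y := by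
  set q : ℝ := κ * (1 + D) / 2 with hq
  have hκ := hϖ.ratio_pos
  have hL := sewingConst_nonneg hM hκD
  have hiter (n : ℕ) : IsDSolution φ ω ϖ (q ^ n * K + sewingConst κ D M) r T y := by
    induction n with
    | zero => exact hy.mono_const hω hϖ hr (by linarith)
    | succ n ih =>
      convert ih.improve_const hφ hω hϖ (hϖ.ratio_lt_two hκD) hM hr (by positivity) using 1
      rw [pow_succ', mul_add, mul_assoc, add_assoc, sewingConst_isFixed hκD]
  intro s t hrs hst ht
  have hlim : Tendsto (fun n : ℕ => (q ^ n * K + sewingConst κ D M) * ϖ (ω s t)) atTop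
      (𝓝 ((0 * K + sewingConst κ D M) * ϖ (ω s t))) :=
    (((tendsto_pow_atTop_nhds_zero_of_lt_one (by positivity) (by linarith)).mul_const K).add_const
      _).mul_const _
  simpa only [zero_mul, zero_add] using ge_of_tendsto' hlim fun n => hiter n hrs hst ht

lemma IsDSolution.concatAt (hφ : IsAlmostFlow T ω ϖ (fun _ => M) D φ) (hω : IsControl T ω)
    (hϖ : IsRemainder κ ϖ) (hM : 0 ≤ M) (hr : 0 ≤ r) (hK : 0 ≤ K) {s : ℝ}
    (hsT : s ≤ T) {y z : ℝ → V} (hy : IsDSolution φ ω ϖ K r T y) (hz : IsDSolution φ ω ϖ K s T z)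
    (hzy : z s = y s) :
    IsDSolution φ ω ϖ (K + D * K + M) r T (_root_.concatAt s y z) := by
  have hKle : K ≤ K + D * K + M := by
    have : 0 ≤ D * K := by positivity
    linarith
  intro u t hru hut ht
  have hu : 0 ≤ u := hr.trans hru
  rcases le_or_gt s u with hsu | hus
  · rw [concatAt_of_le hsu, concatAt_of_le (hsu.trans hut)]
    exact (hz hsu hut ht).trans <|
      mul_le_mul_of_nonneg_right hKle (hϖ.comp_control_nonneg hω hu hut ht)
  rw [concatAt_of_lt hus]
  rcases le_or_gt s t with hst | hts
  · rw [concatAt_of_le hst]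
    calc dist (z t) (φ t u (y u))
        ≤ dist (z t) (φ t s (z s)) + D * dist (z s) (φ s u (y u)) + M * ϖ (ω u t) :=
          hφ.dist_le_add hu hus.le hst ht _ _ _
      _ ≤ K * ϖ (ω s t) + D * (K * ϖ (ω u s)) + M * ϖ (ω u t) := by
          gcongr
          · exact hz le_rfl hst ht
          · exact hzy ▸ hy hru hus.le hsT
      _ ≤ K * ϖ (ω u t) + D * (K * ϖ (ω u t)) + M * ϖ (ω u t) := by
          gcongr ?_ + ?_ + _
          · gcongr; exact hϖ.comp_control_mono hω hu hus.le hst le_rfl ht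
          · gcongr; exact hϖ.comp_control_mono hω hu le_rfl hus.le hst ht
      _ = (K + D * K + M) * ϖ (ω u t) := by ring
  · rw [concatAt_of_lt hts]
    exact (hy hru hut ht).trans <|
      mul_le_mul_of_nonneg_right hKle (hϖ.comp_control_nonneg hω hu hut ht)

lemma IsAlmostFlow.exists_dist_le_of_finset (hφ : IsAlmostFlow T ω ϖ (fun _ => M) D φ)
    (hω : IsControl T ω) (hϖ : IsRemainder κ ϖ) (hM : 0 ≤ M) (hκD : κ * (1 + D) < 2) (hr : 0 ≤ r)
    (hrT : r ≤ T) (a : V) (F : Finset ℝ) :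
    ∃ y : ℝ → V, y r = a ∧ ∀ s ∈ F, ∀ t ∈ F, r ≤ s → s ≤ t → t ≤ T →
      dist (y t) (φ t s (y s)) ≤ sewingConst κ D M * ϖ (ω s t) := by
  set G : Finset ℝ := {x ∈ F | r < x ∧ x ≤ T} with hG
  obtain ⟨y, hyr, hy⟩ := exists_isEulerScheme φ r a G fun t ht => (Finset.mem_filter.1 ht).2.1
  have hGT : ↑(insert r G) ⊆ Icc 0 T := by
    simp only [hG, Finset.coe_insert, Finset.coe_filter, insert_subset_iff]
    exact ⟨⟨hr, hrT⟩, fun x hx => ⟨hr.trans hx.2.1.le, hx.2.2⟩⟩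
  have hmem {x : ℝ} (hx : x ∈ F) (hrx : r ≤ x) (hxT : x ≤ T) : x ∈ insert r G := by
    rcases hrx.eq_or_lt with rfl | hrx
    · exact Finset.mem_insert_self _ _
    · exact Finset.mem_insert_of_mem (Finset.mem_filter.2 ⟨hx, hrx, hxT⟩)
  exact ⟨y, hyr, fun s hs t ht hrs hst htT => hy.dist_le hφ hω hϖ hM hκD hGT
    (hmem hs hrs (hst.trans htT)) (hmem ht (hrs.trans hst) htT) hst⟩

/-- The D-solutions on `[r, T]` with constant `K`, normalized to be constant on `(-∞, r]` and on
`[T, ∞)` so that they are determined by their restriction to `[r, T]`. -/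
def dSolutions {V : Type*} [PseudoMetricSpace V] (φ : ℝ → ℝ → V → V) (ω : ℝ → ℝ → ℝ) (ϖ : ℝ → ℝ)
    (K T r : ℝ) : Set (ℝ → V) :=
  {y | IsDSolution φ ω ϖ K r T y ∧ (∀ t ≤ r, y t = y r) ∧ ∀ t ≥ T, y t = y T}

lemma apply_projIcc_of_mem_dSolutions (hrT : r ≤ T) {y : ℝ → V} (hy : y ∈ dSolutions φ ω ϖ K T r)
    (t : ℝ) : y (projIcc r T hrT t) = y t := by
  rcases le_total t r with htr | hrt
  · rw [projIcc_of_le_left hrT htr, hy.2.1 t htr]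
  rcases le_total t T with htT | hTt
  · rw [projIcc_of_mem hrT ⟨hrt, htT⟩]
  · rw [projIcc_of_right_le hrT hTt, hy.2.2 t hTt]

lemma IsDSolution.comp_projIcc_mem_dSolutions (hrT : r ≤ T) {y : ℝ → V}
    (hy : IsDSolution φ ω ϖ K r T y) :
    (fun t => y (projIcc r T hrT t)) ∈ dSolutions φ ω ϖ K T r := by
  refine ⟨fun s t hrs hst ht => ?_, fun t ht => ?_, fun t ht => ?_⟩
  · simpa only [projIcc_of_mem hrT ⟨hrs, hst.trans ht⟩, projIcc_of_mem hrT ⟨hrs.trans hst, ht⟩]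
      using hy hrs hst ht
  · simp only [projIcc_of_le_left hrT ht, projIcc_left]
  · simp only [projIcc_of_right_le hrT ht, projIcc_right]

end PseudoMetric

variable {V : Type*} [MetricSpace V] {φ : ℝ → ℝ → V → V}

lemma IsAlmostFlow.exists_isDSolution [ProperSpace V] (hφ : IsAlmostFlow T ω ϖ (fun _ => M) D φ)
    (hω : IsControl T ω) (hϖ : IsRemainder κ ϖ) (hM : 0 ≤ M) (hκD : κ * (1 + D) < 2) (hr : 0 ≤ r)
    (hrT : r ≤ T) (a : V) :
    ∃ y : ℝ → V, y r = a ∧ IsDSolution φ ω ϖ (sewingConst κ D M) r T y := by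
  choose y hyr hy using hφ.exists_dist_le_of_finset hω hϖ hM hκD hr hrT a
  let 𝒰 : Ultrafilter (Finset ℝ) := Ultrafilter.of atTop
  have hmem (t : ℝ) : ∀ᶠ F in (𝒰 : Filter (Finset ℝ)), t ∈ F :=
    Eventually.filter_mono (Ultrafilter.of_le _) <|
      (eventually_ge_atTop {t}).mono fun _ => Finset.singleton_subset_iff.1
  have hlim : ∀ t ∈ Icc r T, ∃ x, Tendsto (fun F => y F t) 𝒰 (𝓝 x) := by
    intro t ht
    have hball : ∀ᶠ F in (𝒰 : Filter (Finset ℝ)),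
        y F t ∈ closedBall (φ t r a) (sewingConst κ D M * ϖ (ω r t)) := by
      filter_upwards [hmem r, hmem t] with F hrF htF
      simpa only [mem_closedBall, hyr] using hy F r hrF t htF le_rfl ht.1 ht.2
    obtain ⟨x, -, hx⟩ := (isCompact_closedBall _ _).ultrafilter_le_nhds'
      (𝒰.map fun F => y F t) hball
    exact ⟨x, hx⟩
  have : Nonempty V := ⟨a⟩
  choose! z hz using hlim
  refine ⟨z, ?_, fun s t hrs hst ht => ?_⟩
  · refine tendsto_nhds_unique (hz r ⟨le_rfl, hrT⟩) ?_
    simp only [hyr, tendsto_const_nhds]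
  · have hφz : Tendsto (fun F => φ t s (y F s)) 𝒰 (𝓝 (φ t s (z s))) :=
      ((hφ.lipschitzWith (hr.trans hrs) hst ht).continuous.tendsto _).comp
        (hz s ⟨hrs, hst.trans ht⟩)
    refine le_of_tendsto ((hz t ⟨hrs.trans hst, ht⟩).dist hφz) ?_
    filter_upwards [hmem s, hmem t] with F hsF htF
    exact hy F s hsF t htF hrs hst ht

lemma IsDSolution.eqOn_of_eqOn_dense (hω : IsControl T ω) (hϖ : IsRemainder κ ϖ) (hκ : κ < 2)
    (hr : 0 ≤ r) (hK : 0 ≤ K) {y z : ℝ → V} (hy : IsDSolution φ ω ϖ K r T y)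
    (hz : IsDSolution φ ω ϖ K r T z) {Q : Set ℝ} (hQ : Dense Q) (hyzr : y r = z r)
    (hyz : EqOn y z Q) : EqOn y z (Icc r T) := by
  rintro t ⟨hrt, ht⟩
  rcases hrt.eq_or_lt with rfl | hrt'
  · exact hyzr
  refine eq_of_forall_dist_le fun ε hε => ?_
  obtain ⟨d, hd, hsmall⟩ := hϖ.exists_comp_control_lt hκ hω
    (show 0 < ε / (2 * K + 1) by positivity)
  obtain ⟨p, hpQ, hp, hpt⟩ := hQ.exists_between (max_lt hrt' (sub_lt_self t hd))
  obtain ⟨hrp, htp⟩ := max_lt_iff.1 hp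
  have hp0 : 0 ≤ p := hr.trans hrp.le
  calc dist (y t) (z t)
      ≤ dist (y t) (φ t p (y p)) + dist (z t) (φ t p (y p)) := dist_triangle_right _ _ _
    _ ≤ K * ϖ (ω p t) + K * ϖ (ω p t) := by
        gcongr
        · exact hy hrp.le hpt.le ht
        · exact hyz hpQ ▸ hz hrp.le hpt.le ht
    _ ≤ K * (ε / (2 * K + 1)) + K * (ε / (2 * K + 1)) := by
        have := (hsmall hp0 hpt.le ht (by linarith)).le
        gcongr
    _ = 2 * K / (2 * K + 1) * ε := by ring
    _ ≤ ε := mul_le_of_le_one_left hε.le (div_le_one_of_le₀ (by linarith) (by positivity))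

lemma IsAlmostFlow.isClosed_dSolutions (hφ : IsAlmostFlow T ω ϖ N D φ) (hr : 0 ≤ r) :
    IsClosed (dSolutions φ ω ϖ K T r) := by
  simp only [dSolutions, IsDSolution, ofPred_and, ofPred_forall]
  have hconst (t u : ℝ) : IsClosed {y : ℝ → V | y t = y u} :=
    isClosed_eq (continuous_apply t) (continuous_apply u)
  refine .inter (isClosed_iInter fun s => isClosed_iInter fun t => isClosed_iInter fun hrs =>
    isClosed_iInter fun hst => isClosed_iInter fun ht => ?_)
    (.inter (isClosed_iInter fun t => isClosed_iInter fun _ => hconst t r)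
      (isClosed_iInter fun t => isClosed_iInter fun _ => hconst t T))
  exact isClosed_le ((continuous_apply t).dist <|
    (hφ.lipschitzWith (hr.trans hrs) hst ht).continuous.comp (continuous_apply s)) continuous_const

lemma IsAlmostFlow.isCompact_dSolutions_start_mem [ProperSpace V] (hφ : IsAlmostFlow T ω ϖ N D φ)
    (hr : 0 ≤ r) (hrT : r ≤ T) {A : Set V} (hA : IsCompact A) :
    IsCompact {y ∈ dSolutions φ ω ϖ K T r | y r ∈ A} := by
  let p (t : ℝ) : Icc r T := projIcc r T hrT t
  have hbox : IsCompact (univ.pi fun t => cthickening (K * ϖ (ω r (p t))) (φ (p t) r '' A)) :=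
    isCompact_univ_pi fun t =>
      (hA.image (hφ.lipschitzWith hr (p t).2.1 (p t).2.2).continuous).cthickening
  refine hbox.of_isClosed_subset
    ((hφ.isClosed_dSolutions hr).inter (hA.isClosed.preimage (continuous_apply r))) ?_
  rintro y ⟨hy, hyr⟩ t -
  rw [← apply_projIcc_of_mem_dSolutions hrT hy t]
  exact mem_cthickening_of_dist_le _ _ _ _ (mem_image_of_mem _ hyr)
    (hy.1 le_rfl (p t).2.1 (p t).2.2)

lemma IsAlmostFlow.measurableSet_image_dSolutions [ProperSpace V] [MeasurableSpace V]
    [BorelSpace V] (hφ : IsAlmostFlow T ω ϖ N D φ) (hr : 0 ≤ r) (hrT : r ≤ T) {F : Set (ℝ → V)}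
    (hF : IsClosed F) : MeasurableSet (Function.eval r '' (dSolutions φ ω ϖ K T r ∩ F)) := by
  have hcover : dSolutions φ ω ϖ K T r ∩ F =
      ⋃ k, {y ∈ dSolutions φ ω ϖ K T r | y r ∈ compactCovering V k} ∩ F := by
    rw [← iUnion_inter]
    congr 1
    ext y
    simp only [mem_iUnion, mem_ofPred_eq, exists_and_left,
      iff_self_and, exists_mem_compactCovering, implies_true]
  rw [hcover, image_iUnion]
  exact .iUnion fun k => (((hφ.isCompact_dSolutions_start_mem hr hrT
    (isCompact_compactCovering V k)).inter_right hF).image (continuous_apply r)).measurableSet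

lemma IsAlmostFlow.isSelectionFamily_dSolutions [ProperSpace V] [MeasurableSpace V]
    [BorelSpace V] (hφ : IsAlmostFlow T ω ϖ (fun _ => M) D φ) (hω : IsControl T ω)
    (hϖ : IsRemainder κ ϖ) (hM : 0 ≤ M) (hκD : κ * (1 + D) < 2) :
    IsSelectionFamily (Icc 0 T) (dSolutions φ ω ϖ (sewingConst κ D M) T) where
  eq_start _ t _ htr _ hy := hy.2.1 t htr
  restrict_mem r s _ hs hrs y hy := by
    refine ⟨fun u t hsu hut ht => ?_, fun t ht => ?_, fun t ht => ?_⟩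
    · simpa only [max_eq_right hsu, max_eq_right (hsu.trans hut)] using
        hy.1 (hrs.trans hsu) hut ht
    · simp only [max_eq_left ht, max_self]
    · simp only [max_eq_right hs.2, max_eq_right (hs.2.trans ht), hy.2.2 t ht]
  concatAt_mem r s hr hs hrs y hy z hz hzy := by
    have hL := sewingConst_nonneg hM hκD
    have hconcat := hy.1.concatAt hφ hω hϖ hM hr.1 hL hs.2 hz.1 hzy
    refine ⟨hconcat.to_sewingConst hφ hω hϖ hM hκD hr.1 (by positivity), fun t ht => ?_,
      fun t ht => ?_⟩
    · rw [concatAt_of_ge (ht.trans hrs) hzy, concatAt_of_ge hrs hzy, hy.2.1 t ht]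
    · rw [concatAt_of_le (hs.2.trans ht), concatAt_of_le hs.2, hz.2.2 t ht]
  exists_mem r hr a := by
    obtain ⟨y, hyr, hy⟩ := hφ.exists_isDSolution hω hϖ hM hκD hr.1 hr.2 a
    exact ⟨_, hy.comp_projIcc_mem_dSolutions hr.2, by simp only [projIcc_left, hyr]⟩
  isCompact_fiber r hr a := hφ.isCompact_dSolutions_start_mem hr.1 hr.2 isCompact_singleton
  measurableSet_image r hr F hF := hφ.measurableSet_image_dSolutions hr.1 hr.2 hF

lemma eq_of_mem_dSolutions_of_eqOn_dense (hω : IsControl T ω) (hϖ : IsRemainder κ ϖ) (hκ : κ < 2)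
    (hr : 0 ≤ r) (hrT : r ≤ T) (hK : 0 ≤ K) {y z : ℝ → V} (hy : y ∈ dSolutions φ ω ϖ K T r)
    (hz : z ∈ dSolutions φ ω ϖ K T r) {Q : Set ℝ} (hQ : Dense Q) (hyzr : y r = z r)
    (hyz : EqOn y z Q) : y = z := by
  ext t
  rw [← apply_projIcc_of_mem_dSolutions hrT hy, ← apply_projIcc_of_mem_dSolutions hrT hz]
  exact hy.1.eqOn_of_eqOn_dense hω hϖ hκ hr hK hz.1 hQ hyzr hyz (projIcc r T hrT t).2

lemma exists_continuous_separating_seq (E : Type*) [MetricSpace E]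
    [TopologicalSpace.SeparableSpace E] :
    ∃ f : ℕ → E → ℝ, (∀ m, Continuous (f m)) ∧ ∀ a b, (∀ m, f m a = f m b) → a = b := by
  refine ⟨fun m a => kuratowskiEmbedding E a m, fun m => ?_, fun a b hab => ?_⟩
  · exact ((lp.evalCLM ℝ (fun _ : ℕ => ℝ) ⊤ m).continuous).comp
      (kuratowskiEmbedding.isometry E).continuous
  · exact (kuratowskiEmbedding.isometry E).injective (lp.ext (funext hab))

lemma exists_separating_seq_dSolutions [TopologicalSpace.SeparableSpace V]
    (hω : IsControl T ω) (hϖ : IsRemainder κ ϖ) (hκ : κ < 2) (φ : ℝ → ℝ → V → V) (hK : 0 ≤ K) :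
    ∃ (τ : ℕ → ℝ) (g : ℕ → V → ℝ), (∀ n, Continuous (g n)) ∧ ∀ r ∈ Icc 0 T,
      ∀ y ∈ dSolutions φ ω ϖ K T r, ∀ z ∈ dSolutions φ ω ϖ K T r, y r = z r →
        (∀ n, g n (y (τ n)) = g n (z (τ n))) → y = z := by
  obtain ⟨f, hf, hf_sep⟩ := exists_continuous_separating_seq V
  obtain ⟨e, he⟩ := exists_surjective_nat (ℚ × ℕ)
  refine ⟨fun n => (e n).1, fun n => f (e n).2, fun n => hf _, fun r hr y hy z hz hyzr hyz => ?_⟩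
  refine eq_of_mem_dSolutions_of_eqOn_dense hω hϖ hκ hr.1 hr.2 hK hy hz Rat.denseRange_cast hyzr
    (forall_mem_range.2 fun q => hf_sep _ _ fun m => ?_)
  obtain ⟨n, hn⟩ := he (q, m)
  simpa only [hn] using hyz n

lemma IsLipAlmostFlow.isAlmostFlow {E : Type*} [NormedAddCommGroup E] {N : E → ℝ} {δT : ℝ}
    {φ : ℝ → ℝ → E → E} (hφ : IsLipAlmostFlow ω ϖ N δT φ) (hδT : 0 ≤ δT) (T : ℝ) :
    IsAlmostFlow T ω ϖ N (1 + δT).toNNReal φ where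
  self_apply _ ht _ := hφ.flow_id ht
  lipschitzWith _ _ hs hst _ := LipschitzWith.of_dist_le_mul fun a b => by
    simpa only [dist_eq_norm, Real.coe_toNNReal _ (add_nonneg zero_le_one hδT)]
      using hφ.lip hs hst a b
  dist_comp_le _ _ _ hr hrs hst _ a := by
    simpa only [dist_eq_norm] using hφ.almost hr hrs hst a

theorem statement8_general [ProperSpace V] [MeasurableSpace V] [BorelSpace V]
    (hω : IsControl T ω) (hϖ : IsRemainder κ ϖ) {N : V → ℝ} (hN1 : ∀ a, 1 ≤ N a)
    (hNbdd : BddAbove (range N)) (hφ : IsAlmostFlow T ω ϖ N D φ) (hκD : κ * (1 + D) < 2) :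
    ∃ ψ : ℝ → ℝ → V → V,
      (∀ ⦃t : ℝ⦄, 0 ≤ t → t ≤ T → ∀ a : V, ψ t t a = a) ∧
      (∀ ⦃r s t : ℝ⦄, 0 ≤ r → r ≤ s → s ≤ t → t ≤ T → ∀ a : V,
        ψ t s (ψ s r a) = ψ t r a) ∧
      (∀ ⦃s t : ℝ⦄, 0 ≤ s → s ≤ t → t ≤ T → Measurable (ψ t s)) ∧
      ∃ C : ℝ, ∀ ⦃s t : ℝ⦄, 0 ≤ s → s ≤ t → t ≤ T → ∀ a : V,
        dist (ψ t s a) (φ t s a) ≤ C * N a * ϖ (ω s t) := by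
  obtain ⟨M, hM, hNM⟩ := hNbdd.exists_ge 0
  replace hφ : IsAlmostFlow T ω ϖ (fun _ => M) D φ :=
    hφ.mono_weight hϖ hω fun a => hNM _ (mem_range_self a)
  have hL := sewingConst_nonneg hM hκD
  obtain ⟨τ, g, hg, hsep⟩ := exists_separating_seq_dSolutions hω hϖ (hϖ.ratio_lt_two hκD) φ hL
  obtain ⟨ψ, hψ_id, hψ_flow, hψ_meas, hψ_mem⟩ :=
    (hφ.isSelectionFamily_dSolutions hω hϖ hM hκD).exists_flow hg hsep
  refine ⟨ψ, fun t ht htT => hψ_id t ⟨ht, htT⟩,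
    fun r s t hr hrs hst ht => hψ_flow r ⟨hr, hrs.trans (hst.trans ht)⟩ s
      ⟨hr.trans hrs, hst.trans ht⟩ t hrs hst,
    fun s t hs hst ht => hψ_meas s ⟨hs, hst.trans ht⟩ t,
    sewingConst κ D M, fun s t hs hst ht a => ?_⟩
  have hdist : dist (ψ t s a) (φ t s a) ≤ sewingConst κ D M * ϖ (ω s t) := by
    simpa only [hψ_id s ⟨hs, hst.trans ht⟩ a] using (hψ_mem s ⟨hs, hst.trans ht⟩ a).1 le_rfl hst ht
  refine hdist.trans (mul_le_mul_of_nonneg_right ?_ (hϖ.comp_control_nonneg hω hs hst ht))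
  exact le_mul_of_one_le_right hL (hN1 a)

end AlmostFlow

/-- Theorem: the non-linear sewing lemma, weak formulation.
Under Hypothesis 1, there exists a family `ψ = (ψ_{t,s})_{0≤s≤t≤T}` of maps `V → V`
with the flow property (`ψ_{t,t} = id`, `ψ_{t,s}∘ψ_{s,r} = ψ_{t,r}`), such that every
`ψ_{t,s}` is Borel measurable and `ψ` lies in the same galaxy as `φ`:
`‖ψ_{t,s}(a) − φ_{t,s}(a)‖ ≤ C·N(a)·ϖ(ω_{s,t})` for some constant `C`. -/
theorem statement8 {V : Type*} [NormedAddCommGroup V] [NormedSpace ℝ V]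
    [FiniteDimensional ℝ V] [MeasurableSpace V] [BorelSpace V]
    (T : ℝ)
    (ω : ℝ → ℝ → ℝ) (hω : ∀ S > (0:ℝ), IsControl S ω)
    (κ : ℝ) (hκ : κ ∈ Set.Ioo (0:ℝ) 1)
    (ϖ : ℝ → ℝ) (hϖ : IsRemainder κ ϖ)
    (δ : ℝ → ℝ) (hδ0 : ∀ S, 0 ≤ δ S) (hδmono : Monotone δ)
    (hδlim : Filter.Tendsto δ (nhdsWithin 0 (Set.Ioi 0)) (nhds 0))
    (N : V → ℝ) (hN1 : ∀ a, 1 ≤ N a)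
    (CN : NNReal) (hNlip : LipschitzWith CN N)
    (hNbdd : BddAbove (Set.range N))
    (φ : ℝ → ℝ → V → V) (hφ : IsLipAlmostFlow ω ϖ N (δ T) φ)
    (hT : 0 < T) (hsmall : κ * (1 + δ T) < 1)
    (LT : ℝ) (hLT : LT = 2 / (1 - κ * (1 + δ T)))
    (Nsup : ℝ) (hNsup : Nsup = sSup (Set.range N))
    :
    ∃ ψ : ℝ → ℝ → V → V,
      (∀ ⦃t : ℝ⦄, 0 ≤ t → t ≤ T → ∀ a : V, ψ t t a = a) ∧
      (∀ ⦃r s t : ℝ⦄, 0 ≤ r → r ≤ s → s ≤ t → t ≤ T → ∀ a : V,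
        ψ t s (ψ s r a) = ψ t r a) ∧
      (∀ ⦃s t : ℝ⦄, 0 ≤ s → s ≤ t → t ≤ T → Measurable (ψ t s)) ∧
      ∃ C : ℝ, ∀ ⦃s t : ℝ⦄, 0 ≤ s → s ≤ t → t ≤ T → ∀ a : V,
        ‖ψ t s a - φ t s a‖ ≤ C * N a * ϖ (ω s t) := by
  have hκδ : κ * (1 + (1 + δ T).toNNReal) < 2 := by
    rw [Real.coe_toNNReal _ (add_nonneg zero_le_one (hδ0 T))]
    linarith [hκ.2]
  simpa only [dist_eq_norm] using
    statement8_general (hω T hT) hϖ hN1 hNbdd (hφ.isAlmostFlow (hδ0 T) T) hκδ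

end
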